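/- Let n and d be positive integers and μ, σ, γ > 0. Let (Z_{ij})_{i ∈ {1,…,n+1}, j ∈ {1,…,d}} be i.i.d. random variables each distributed as the Gaussian N(μ, σ²), i.e. the underlying measure is the product over (i,j) of the Gaussian measure N(μ, σ²) on ℝ. Define S_j = Σ_{i=1}^n Z_{ij} for j = 1,…,d, let θ ∈ ℝ^d have coordinates θ_j = γ·sign(S_j), and let Z* = (Z_{(n+1)1}, …, Z_{(n+1)d}) be the test point. Then E[⟨θ, S/n⟩ − ⟨θ, Z*⟩] = d·γ·σ·√(2/(nπ))·exp(−nμ²/(2σ²)). -/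

import Mathlib

open MeasureTheory ProbabilityTheory

/-!
The features decouple by linearity. For a single feature, the test value is independent of the
training sum `S ∼ N(nμ, nσ²)` and has mean `μ = 𝔼[S] / n`, so the gap is
`𝔼[sign(S) (S - nμ)] / n`. For a Gaussian measure `N(m, v)` with density `φ`, almost everywhere
`sign = 2 · 1_{x > 0} - 1`, and `x - m` has mean zero, so the expectation of `sign(x) (x - m)` is
twice the integral of `x - m` over `x > 0`. Since `(x - m) φ = -v φ'`, that integral is `v φ(0)`.
-/

open scoped NNReal

section RealSign

lemma measurable_real_sign : Measurable Real.sign :=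
  Measurable.ite measurableSet_Iio measurable_const
    (Measurable.ite measurableSet_Ioi measurable_const measurable_const)

lemma norm_real_sign_le_one (x : ℝ) : ‖Real.sign x‖ ≤ 1 := by
  rcases Real.sign_apply_eq x with h | h | h <;> simp [h]

lemma real_sign_eq_two_mul_indicator_sub_one {x : ℝ} (hx : x ≠ 0) :
    Real.sign x = 2 * (Set.Ioi 0).indicator 1 x - 1 := by
  rcases hx.lt_or_gt with h | h
  · simp [Real.sign_of_neg h, h.le]
  · norm_num [Real.sign_of_pos h, h]

end RealSign

section GaussianReal

variable (m : ℝ) (v : ℝ≥0)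

lemma hasDerivAt_gaussianPDFReal (x : ℝ) :
    HasDerivAt (gaussianPDFReal m v) (-((x - m) / v) * gaussianPDFReal m v x) x := by
  have hexponent : HasDerivAt (fun y : ℝ => -(y - m) ^ 2 / (2 * v)) (-((x - m) / v)) x := by
    refine ((((hasDerivAt_id x).sub_const m).pow 2).neg.div_const (2 * (v : ℝ))).congr_deriv ?_
    simp only [id_eq]
    ring
  refine (hexponent.exp.const_mul (Real.sqrt (2 * Real.pi * v))⁻¹).congr_deriv ?_
  simp only [gaussianPDFReal]
  ring

lemma integrable_sub_gaussianReal (c : ℝ) : Integrable (fun x => x - c) (gaussianReal m v) :=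
  IsGaussian.integrable_id.sub (integrable_const c)

variable {v}

lemma integrable_gaussianPDFReal_mul_sub (hv : v ≠ 0) (c : ℝ) :
    Integrable fun x => gaussianPDFReal m v x * (x - c) := by
  have h := integrable_sub_gaussianReal m v c
  rw [gaussianReal_of_var_ne_zero m hv, integrable_withDensity_iff_integrable_smul'
    (measurable_gaussianPDF m v) (ae_of_all _ fun _ => gaussianPDF_lt_top)] at h
  simpa only [toReal_gaussianPDF, smul_eq_mul] using h

lemma setIntegral_Ioi_sub_gaussianReal (hv : v ≠ 0) (a : ℝ) :
    ∫ x in Set.Ioi a, (x - m) ∂gaussianReal m v = v * gaussianPDFReal m v a := by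
  have hderiv (x : ℝ) : HasDerivAt (fun y => -(v : ℝ) * gaussianPDFReal m v y)
      (gaussianPDFReal m v x * (x - m)) x := by
    refine ((hasDerivAt_gaussianPDFReal m v x).const_mul (-(v : ℝ))).congr_deriv ?_
    field_simp
  have hint : IntegrableOn (fun x => gaussianPDFReal m v x * (x - m)) (Set.Ioi a) :=
    (integrable_gaussianPDFReal_mul_sub m hv m).integrableOn
  have hlim := tendsto_zero_of_hasDerivAt_of_integrableOn_Ioi (fun x _ => hderiv x) hint
    ((integrable_gaussianPDFReal m v).const_mul _).integrableOn
  calc ∫ x in Set.Ioi a, (x - m) ∂gaussianReal m v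
      = ∫ x in Set.Ioi a, gaussianPDFReal m v x * (x - m) := by
        rw [← integral_indicator measurableSet_Ioi, integral_gaussianReal_eq_integral_smul hv,
          ← integral_indicator measurableSet_Ioi]
        simp only [smul_eq_mul, Set.indicator_mul_right]
    _ = v * gaussianPDFReal m v a := by
        rw [integral_Ioi_of_hasDerivAt_of_tendsto' (fun x _ => hderiv x) hint hlim]
        ring

lemma integral_sign_mul_sub_gaussianReal (hv : v ≠ 0) :
    ∫ x, Real.sign x * (x - m) ∂gaussianReal m v = 2 * v * gaussianPDFReal m v 0 := by
  have := nullSingletonClass_gaussianReal (μ := m) hv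
  have hint := integrable_sub_gaussianReal m v m
  have hmean : ∫ x, (x - m) ∂gaussianReal m v = 0 := by
    rw [integral_sub IsGaussian.integrable_fun_id (integrable_const m), integral_id_gaussianReal]
    simp
  calc ∫ x, Real.sign x * (x - m) ∂gaussianReal m v
      = ∫ x, (2 * (Set.Ioi 0).indicator (fun y => y - m) x - (x - m)) ∂gaussianReal m v := by
        refine integral_congr_ae ((Measure.ae_ne _ 0).mono fun x hx => ?_)
        simp only [real_sign_eq_two_mul_indicator_sub_one hx, Set.indicator_apply, Pi.one_apply]
        split_ifs <;> ring
    _ = 2 * ∫ x in Set.Ioi 0, (x - m) ∂gaussianReal m v := by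
        rw [integral_sub ((hint.indicator measurableSet_Ioi).const_mul 2) hint, hmean, sub_zero,
          integral_const_mul, integral_indicator measurableSet_Ioi]
    _ = 2 * v * gaussianPDFReal m v 0 := by
        rw [setIntegral_Ioi_sub_gaussianReal m hv, mul_assoc]

lemma two_mul_mul_gaussianPDFReal_zero :
    2 * v * gaussianPDFReal m v 0 = Real.sqrt (2 * v / Real.pi) * Real.exp (-m ^ 2 / (2 * v)) := by
  have hnormalization : 2 * v * (Real.sqrt (2 * Real.pi * v))⁻¹ = Real.sqrt (2 * v / Real.pi) := by
    have hsquare : 2 * v / Real.pi = (2 * v) ^ 2 / (2 * Real.pi * v) := by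
      rw [mul_right_comm, sq, ← div_div, mul_self_div_self]
    rw [hsquare, Real.sqrt_div (sq_nonneg _), Real.sqrt_sq (by positivity), div_eq_mul_inv]
  rw [gaussianPDFReal, zero_sub, neg_sq, ← mul_assoc, hnormalization]

end GaussianReal

section RandomVariables

variable {Ω : Type*} [MeasurableSpace Ω] {P : Measure Ω}

lemma integrable_of_hasLaw_gaussianReal {X : Ω → ℝ} {m : ℝ} {v : ℝ≥0}
    (hX : HasLaw X (gaussianReal m v) P) : Integrable X P := by
  have h : Integrable id (P.map X) := hX.map_eq ▸ IsGaussian.integrable_id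
  exact h.comp_aemeasurable hX.aemeasurable

lemma hasLaw_sum_gaussianReal {ι : Type*} {X : ι → Ω → ℝ} {m : ι → ℝ} {v : ι → ℝ≥0}
    (hindep : iIndepFun X P) (hX : ∀ i, HasLaw (X i) (gaussianReal (m i) (v i)) P)
    (s : Finset ι) :
    HasLaw (∑ i ∈ s, X i) (gaussianReal (∑ i ∈ s, m i) (∑ i ∈ s, v i)) P := by
  classical
  have := hindep.isProbabilityMeasure
  induction s using Finset.induction_on with
  | empty =>
    simp only [Finset.sum_empty, gaussianReal_zero_var]
    exact hasLaw_dirac_of_ae_eq (ae_of_all _ fun _ => rfl)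
  | insert a s ha ih =>
    simp only [Finset.sum_insert ha]
    rw [← gaussianReal_conv_gaussianReal]
    exact (hindep.indepFun_finsetSum_of_notMem₀ (fun i => (hX i).aemeasurable) ha).symm.hasLaw_add
      (hX a) ih

lemma integrable_sign_mul {S Y : Ω → ℝ} (hS : AEMeasurable S P) (hY : Integrable Y P) :
    Integrable (fun ω => Real.sign (S ω) * Y ω) P :=
  hY.bdd_mul (measurable_real_sign.comp_aemeasurable hS).aestronglyMeasurable
    (ae_of_all _ fun _ => norm_real_sign_le_one _)

lemma integral_sign_mul_of_indepFun {S Y : Ω → ℝ} (hS : AEMeasurable S P)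
    (hY : AEMeasurable Y P) (hindep : IndepFun S Y P) :
    ∫ ω, Real.sign (S ω) * Y ω ∂P = (∫ ω, Real.sign (S ω) ∂P) * ∫ ω, Y ω ∂P :=
  (hindep.comp measurable_real_sign measurable_id).integral_fun_mul_eq_mul_integral
    (measurable_real_sign.comp_aemeasurable hS).aestronglyMeasurable hY.aestronglyMeasurable

lemma integral_sign_mul_sub_of_indepFun {S Y : Ω → ℝ} {m c : ℝ} {v : ℝ≥0} (hv : v ≠ 0)
    (hS : HasLaw S (gaussianReal m v) P) (hY : Integrable Y P) (hmean : ∫ ω, Y ω ∂P = c * m)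
    (hindep : IndepFun S Y P) :
    ∫ ω, Real.sign (S ω) * (c * S ω - Y ω) ∂P = c * (2 * v * gaussianPDFReal m v 0) := by
  have := hS.isProbabilityMeasure
  have hSint := integrable_of_hasLaw_gaussianReal hS
  have hsign (X : Ω → ℝ) (hX : Integrable X P) := integrable_sign_mul hS.aemeasurable hX
  have hreplace : ∫ ω, Real.sign (S ω) * Y ω ∂P = ∫ ω, Real.sign (S ω) * (c * m) ∂P := by
    rw [integral_sign_mul_of_indepFun hS.aemeasurable hY.aemeasurable hindep, hmean,
      integral_mul_const]
  calc ∫ ω, Real.sign (S ω) * (c * S ω - Y ω) ∂P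
      = ∫ ω, Real.sign (S ω) * (c * S ω) ∂P - ∫ ω, Real.sign (S ω) * Y ω ∂P := by
        simp only [mul_sub]
        exact integral_sub (hsign _ (hSint.const_mul c)) (hsign _ hY)
    _ = ∫ ω, c * (Real.sign (S ω) * (S ω - m)) ∂P := by
        rw [hreplace, ← integral_sub (hsign _ (hSint.const_mul c)) (hsign _ (integrable_const _))]
        congr with ω
        ring
    _ = c * ∫ x, Real.sign x * (x - m) ∂gaussianReal m v := by
        rw [integral_const_mul]
        exact congrArg (c * ·) (hS.integral_comp (f := fun x => Real.sign x * (x - m))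
          (measurable_real_sign.mul (measurable_id.sub_const m)).aestronglyMeasurable)
    _ = c * (2 * v * gaussianPDFReal m v 0) := by rw [integral_sign_mul_sub_gaussianReal m hv]

end RandomVariables

section LossGap

variable {Ω : Type*} [MeasurableSpace Ω] {P : Measure Ω} {n : ℕ} {μ : ℝ}

lemma integrable_sign_sum_mul_average_sub {X : Fin (n + 1) → Ω → ℝ} (hX : ∀ i, Integrable (X i) P) :
    Integrable (fun ω => Real.sign (∑ i : Fin n, X i.castSucc ω) *
      ((∑ i : Fin n, X i.castSucc ω) / n - X (Fin.last n) ω)) P := by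
  have hsum : Integrable (fun ω => ∑ i : Fin n, X i.castSucc ω) P :=
    integrable_finsetSum _ fun i _ => hX i.castSucc
  exact integrable_sign_mul hsum.aemeasurable ((hsum.div_const n).sub (hX _))

lemma integral_sign_sum_mul_average_sub (hn : 0 < n) {v : ℝ≥0} (hv : v ≠ 0)
    {X : Fin (n + 1) → Ω → ℝ} (hindep : iIndepFun X P)
    (hX : ∀ i, HasLaw (X i) (gaussianReal μ v) P) :
    ∫ ω, Real.sign (∑ i : Fin n, X i.castSucc ω) *
        ((∑ i : Fin n, X i.castSucc ω) / n - X (Fin.last n) ω) ∂P =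
      Real.sqrt (2 * v / (n * Real.pi)) * Real.exp (-(n * μ ^ 2) / (2 * v)) := by
  have hn₀ : (n : ℝ) ≠ 0 := by positivity
  set S : Ω → ℝ := fun ω => ∑ i : Fin n, X i.castSucc ω
  have hS : S = ∑ i ∈ Finset.univ.map Fin.castSuccEmb, X i := by
    ext ω
    simp [S]
  have hlaw : HasLaw S (gaussianReal (n * μ) (n * v)) P := by
    simpa [hS] using hasLaw_sum_gaussianReal hindep hX (Finset.univ.map Fin.castSuccEmb)
  have hindep_last : IndepFun S (X (Fin.last n)) P :=
    hS ▸ hindep.indepFun_finsetSum_of_notMem₀ (fun i => (hX i).aemeasurable)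
      (by simp [Fin.castSucc_ne_last])
  have hmean : ∫ ω, X (Fin.last n) ω ∂P = (n : ℝ)⁻¹ * (n * μ) := by
    rw [(hX _).integral_eq, integral_id_gaussianReal, inv_mul_cancel_left₀ hn₀]
  have hsqrt : (n : ℝ)⁻¹ * Real.sqrt (2 * (n * v) / Real.pi) =
      Real.sqrt (2 * v / (n * Real.pi)) := by
    rw [← Real.sqrt_sq (inv_nonneg.2 n.cast_nonneg), ← Real.sqrt_mul (sq_nonneg _)]
    congr 1
    field_simp
  have hexponent : -(n * μ) ^ 2 / (2 * (n * v)) = -(n * μ ^ 2) / (2 * (v : ℝ)) := by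
    field_simp
  calc ∫ ω, Real.sign (S ω) * (S ω / n - X (Fin.last n) ω) ∂P
      = ∫ ω, Real.sign (S ω) * ((n : ℝ)⁻¹ * S ω - X (Fin.last n) ω) ∂P := by
        simp only [div_eq_inv_mul]
    _ = (n : ℝ)⁻¹ * (2 * ↑(n * v) * gaussianPDFReal (n * μ) (n * v) 0) :=
        integral_sign_mul_sub_of_indepFun (mul_ne_zero (by positivity) hv) hlaw
          (integrable_of_hasLaw_gaussianReal (hX _)) hmean hindep_last
    _ = Real.sqrt (2 * v / (n * Real.pi)) * Real.exp (-(n * μ ^ 2) / (2 * v)) := by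
        rw [two_mul_mul_gaussianPDFReal_zero, NNReal.coe_mul, NNReal.coe_natCast, ← mul_assoc,
          hsqrt, hexponent]

theorem standard_loss_gap_general {κ : Type*} [Fintype κ] (hn : 0 < n) {σ : ℝ≥0} (hσ : σ ≠ 0)
    (γ : ℝ) {Z : Fin (n + 1) → κ → Ω → ℝ} (hindep : ∀ j, iIndepFun (Z · j) P)
    (hZ : ∀ i j, HasLaw (Z i j) (gaussianReal μ (σ ^ 2)) P) :
    ∫ ω, ((∑ j, (γ * Real.sign (∑ i : Fin n, Z i.castSucc j ω)) *
          ((∑ i : Fin n, Z i.castSucc j ω) / n)) -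
        ∑ j, (γ * Real.sign (∑ i : Fin n, Z i.castSucc j ω)) * Z (Fin.last n) j ω) ∂P =
      Fintype.card κ * γ * σ * Real.sqrt (2 / (n * Real.pi)) *
        Real.exp (-(n * μ ^ 2) / (2 * σ ^ 2)) := by
  have hsqrt : Real.sqrt (2 * σ ^ 2 / (n * Real.pi)) = σ * Real.sqrt (2 / (n * Real.pi)) := by
    rw [mul_comm, mul_div_assoc, Real.sqrt_mul (sq_nonneg _), Real.sqrt_sq σ.coe_nonneg]
  have hgap (j : κ) := integral_sign_sum_mul_average_sub hn (pow_ne_zero 2 hσ) (hindep j) (hZ · j)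
  simp only [NNReal.coe_pow, hsqrt] at hgap
  simp only [← Finset.sum_sub_distrib, ← mul_sub, mul_assoc γ]
  rw [integral_finsetSum _ fun j _ => (integrable_sign_sum_mul_average_sub fun i =>
    integrable_of_hasLaw_gaussianReal (hZ i j)).const_mul γ]
  simp only [integral_const_mul, hgap, Finset.sum_const, Finset.card_univ, nsmul_eq_mul]
  ring

end LossGap

/-- Loss gap of the standard model: with `(Z_{ij})` i.i.d. `N(μ, σ²)` for
`i ∈ {1,…,n+1}`, `j ∈ {1,…,d}`, `S_j = ∑_{i=1}^n Z_{ij}`, `θ_j = γ·sign(S_j)` and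
test point `Z*_j = Z_{(n+1)j}`,
`E[⟨θ, S/n⟩ − ⟨θ, Z*⟩] = d·γ·σ·√(2/(nπ))·exp(−nμ²/(2σ²))`. -/
theorem standard_loss_gap (n d : ℕ) (hn : 0 < n) (hd : 0 < d)
    (μ σ γ : ℝ) (hμ : 0 < μ) (hσ : 0 < σ) (hγ : 0 < γ) :
    (∫ ω : Fin (n + 1) × Fin d → ℝ,
        ((∑ j : Fin d, (γ * Real.sign (∑ i : Fin n, ω (i.castSucc, j))) *
            ((∑ i : Fin n, ω (i.castSucc, j)) / n)) -
          ∑ j : Fin d, (γ * Real.sign (∑ i : Fin n, ω (i.castSucc, j))) * ω (Fin.last n, j))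
        ∂(Measure.pi fun _ : Fin (n + 1) × Fin d => gaussianReal μ ⟨σ ^ 2, sq_nonneg σ⟩))
      = d * γ * σ * Real.sqrt (2 / (n * Real.pi)) * Real.exp (-(n * μ ^ 2) / (2 * σ ^ 2)) := by
  lift σ to ℝ≥0 using hσ.le
  have hgap := standard_loss_gap_general hn (NNReal.coe_pos.1 hσ).ne' γ
    (P := Measure.pi fun _ => gaussianReal μ (σ ^ 2))
    (Z := fun i j (ω : Fin (n + 1) × Fin d → ℝ) => ω (i, j))
    (fun j => (iIndepFun_pi fun _ => aemeasurable_id).precomp (Prod.mk_left_injective j))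
    fun i j => (measurePreserving_eval (fun _ => gaussianReal μ (σ ^ 2)) (i, j)).hasLaw
  rwa [Fintype.card_fin] at hgap
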